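/- Let B⁰ = ∪_{n ∈ ℤ} {(n,k) : k = 0, 1, …, 2^{|n|}} ⊂ ℍ. Then H_{B⁰}(x) = 0 for every x ∈ B⁰. -/

import Mathlib

open Filter

namespace SHM

/-- The upper half planar lattice `ℍ = {(x₁,x₂) ∈ ℤ² : x₂ ≥ 0}` (including the x-axis). -/
def upperH : Set (ℤ × ℤ) := {p | 0 ≤ p.2}

/-- The horizontal line `L_n = {(x,n) : x ∈ ℤ}` of height `n`. -/
def lineH (n : ℤ) : Set (ℤ × ℤ) := {p | p.2 = n}

/-- The four unit steps of the planar simple random walk. -/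
def dirs : Finset (ℤ × ℤ) := {(1,0), (-1,0), (0,1), (0,-1)}

/-- The position after `m` steps of the walk started at `z` whose first `n`
increments are given by `σ`. -/
def pos (z : ℤ × ℤ) {n : ℕ} (σ : Fin n → ℤ × ℤ) (m : ℕ) : ℤ × ℤ :=
  z + ∑ i ∈ Finset.univ.filter (fun i : Fin n => (i : ℕ) < m), σ i

/-- The probability that the first `n` increments of the simple random walk
(each uniform on the four unit vectors) satisfy the predicate `E`. -/
noncomputable def stepProb (n : ℕ) (E : (Fin n → ℤ × ℤ) → Prop) : ℝ :=
  (Nat.card {σ : Fin n → ↥dirs // E fun i => ((σ i : ℤ × ℤ))} : ℝ) / 4 ^ n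

/-- `P_z(S_{τ̄_A} = x)` : the walk started at `z` hits `A` (in finite time) for the
first time precisely at the point `x`.  Here `τ̄_A = min {m ≥ 0 : S_m ∈ A}`. -/
noncomputable def hitProb (z : ℤ × ℤ) (A : Set (ℤ × ℤ)) (x : ℤ × ℤ) : ℝ :=
  ∑' n : ℕ, stepProb n fun σ =>
    pos z σ n = x ∧ x ∈ A ∧ ∀ m < n, pos z σ m ∉ A

/-- `P_z(τ̄_A < τ̄_B)` : the walk started at `z` hits `A` strictly before hitting `B`. -/
noncomputable def hitBeforeProb (z : ℤ × ℤ) (A B : Set (ℤ × ℤ)) : ℝ :=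
  ∑' n : ℕ, stepProb n fun σ =>
    pos z σ n ∈ A ∧ pos z σ n ∉ B ∧ ∀ m < n, pos z σ m ∉ A ∧ pos z σ m ∉ B

/-- The stationary harmonic measure `H_{B,N}(x) = Σ_{z ∈ L_N \ B} P_z(S_{τ̄_{B ∪ L₀}} = x)`. -/
noncomputable def harm (B : Set (ℤ × ℤ)) (N : ℕ) (x : ℤ × ℤ) : ℝ :=
  ∑' z : ↥(lineH (N : ℤ) \ B), hitProb (z : ℤ × ℤ) (B ∪ lineH 0) x

/-- The set `B⁰ = ∪_{n ∈ ℤ} {(n,k) : k = 0, 1, …, 2^{|n|}}`. -/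
def Bzero : Set (ℤ × ℤ) := {p | 0 ≤ p.2 ∧ p.2 ≤ 2 ^ p.1.natAbs}

lemma stepProb_nonneg (n : ℕ) (E : (Fin n → ℤ × ℤ) → Prop) : 0 ≤ stepProb n E := by
  unfold stepProb; positivity

lemma stepProb_succ (n : ℕ) (E : (Fin (n+1) → ℤ × ℤ) → Prop) :
    stepProb (n+1) E =
      (∑ d : dirs, stepProb n (fun τ => E (Fin.cons (d : ℤ × ℤ) τ))) / 4 := by
  unfold stepProb
  have e : {σ : Fin (n+1) → ↥dirs // E fun i => ((σ i : ℤ × ℤ))} ≃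
      (Σ d : dirs, {τ : Fin n → ↥dirs //
        E (Fin.cons (d : ℤ × ℤ) (fun i => ((τ i : ℤ × ℤ))))}) :=
    { toFun := fun σ => ⟨σ.1 0, ⟨Fin.tail σ.1, by
        convert σ.2 using 1
        funext i
        refine Fin.cases ?_ (fun j => ?_) i <;> simp [Fin.tail]⟩⟩
      invFun := fun p => ⟨Fin.cons p.1 p.2.1, by
        convert p.2.2 using 1
        funext i
        refine Fin.cases ?_ (fun j => ?_) i <;> simp⟩
      left_inv := fun σ => by
        apply Subtype.ext
        exact Fin.cons_self_tail σ.1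
      right_inv := fun p => by
        obtain ⟨d, τ, h⟩ := p
        rfl }
  rw [Nat.card_congr e, Nat.card_sigma]
  push_cast
  rw [← Finset.sum_div, pow_succ, div_div]

lemma pos_zero (z : ℤ × ℤ) {n : ℕ} (σ : Fin n → ℤ × ℤ) : pos z σ 0 = z := by
  simp [pos]

lemma pos_cons (z d : ℤ × ℤ) {n : ℕ} (τ : Fin n → ℤ × ℤ) (m : ℕ) :
    pos z (Fin.cons d τ : Fin (n+1) → ℤ × ℤ) (m+1) = pos (z + d) τ m := by
  simp only [pos, Finset.sum_filter]
  rw [Fin.sum_univ_succ]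
  simp [add_assoc]

lemma first_succ (z x : ℤ × ℤ) (A : Set (ℤ × ℤ)) (n : ℕ) (hz : z ∉ A) :
    (stepProb (n+1) fun σ => pos z σ (n+1) = x ∧ x ∈ A ∧ ∀ m < n+1, pos z σ m ∉ A)
    = (∑ d : dirs, stepProb n fun σ =>
        pos (z + d) σ n = x ∧ x ∈ A ∧ ∀ m < n, pos (z + d) σ m ∉ A) / 4 := by
  rw [stepProb_succ]
  congr 1
  refine Finset.sum_congr rfl fun d _ => ?_
  congr 1
  funext τ
  rw [pos_cons]
  apply propext
  refine and_congr Iff.rfl (and_congr Iff.rfl ⟨fun h m hm => ?_, fun h m hm => ?_⟩)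
  · rw [← pos_cons]; exact h (m+1) (by omega)
  · cases m with
    | zero => rwa [pos_zero]
    | succ m => rw [pos_cons]; exact h m (by omega)

lemma first_succ_mem (z x : ℤ × ℤ) (A : Set (ℤ × ℤ)) (n : ℕ) (hz : z ∈ A) :
    (stepProb (n+1) fun σ => pos z σ (n+1) = x ∧ x ∈ A ∧ ∀ m < n+1, pos z σ m ∉ A) = 0 := by
  have : (fun σ : Fin (n+1) → ℤ × ℤ =>
      pos z σ (n+1) = x ∧ x ∈ A ∧ ∀ m < n+1, pos z σ m ∉ A) = fun _ => False := by
    funext σ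
    apply propext
    refine ⟨fun h => h.2.2 0 (by omega) (by rwa [pos_zero]), False.elim⟩
  rw [this]
  simp [stepProb]

lemma first_zero_le (z x : ℤ × ℤ) (A : Set (ℤ × ℤ)) :
    (stepProb 0 fun σ => pos z σ 0 = x ∧ x ∈ A ∧ ∀ m < 0, pos z σ m ∉ A) ≤ 1 := by
  unfold stepProb
  simp only [pow_zero, div_one]
  have : Subsingleton {σ : Fin 0 → ↥dirs // pos z (fun i => ((σ i : ℤ × ℤ))) 0 = x ∧ x ∈ A ∧
    ∀ m < 0, pos z (fun i => ((σ i : ℤ × ℤ))) m ∉ A} := inferInstance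
  exact_mod_cast Finite.card_le_one_iff_subsingleton.mpr this

lemma first_zero_ne (z x : ℤ × ℤ) (A : Set (ℤ × ℤ)) (h : ¬ (z = x ∧ x ∈ A)) :
    (stepProb 0 fun σ => pos z σ 0 = x ∧ x ∈ A ∧ ∀ m < 0, pos z σ m ∉ A) = 0 := by
  have : (fun σ : Fin 0 → ℤ × ℤ =>
      pos z σ 0 = x ∧ x ∈ A ∧ ∀ m < 0, pos z σ m ∉ A) = fun _ => False := by
    funext σ
    apply propext
    rw [pos_zero]
    exact ⟨fun g => h ⟨g.1, g.2.1⟩, False.elim⟩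
  rw [this]
  simp [stepProb]

/-- Comparison with a nonnegative superharmonic function on a domain `P`. -/
lemma hit_le_super (A P : Set (ℤ × ℤ)) (x : ℤ × ℤ) (h : ℤ × ℤ → ℝ)
    (hnn : ∀ z ∈ P, 0 ≤ h z) (hx : 1 ≤ h x)
    (hP : ∀ z ∈ P, z ∉ A → ∀ d ∈ dirs, z + d ∈ P)
    (hs : ∀ z ∈ P, z ∉ A → (∑ d : dirs, h (z + d)) / 4 ≤ h z) (z : ℤ × ℤ) (hz : z ∈ P) :
    hitProb z A x ≤ h z := by
  have key : ∀ M : ℕ, ∀ z ∈ P, (∑ n ∈ Finset.range M, stepProb n fun σ =>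
      pos z σ n = x ∧ x ∈ A ∧ ∀ m < n, pos z σ m ∉ A) ≤ h z := by
    intro M
    induction M with
    | zero => intro z hz; simpa using hnn z hz
    | succ M ih =>
      intro z hz
      rw [Finset.sum_range_succ']
      by_cases hA : z ∈ A
      · rw [Finset.sum_eq_zero (fun n _ => first_succ_mem z x A n hA), zero_add]
        by_cases hzx : z = x
        · subst hzx
          exact (first_zero_le _ _ _).trans hx
        · rw [first_zero_ne z x A (fun g => hzx g.1)]
          exact hnn z hz
      · rw [first_zero_ne z x A (fun g => hA (g.1 ▸ g.2)), add_zero,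
          Finset.sum_congr rfl (fun n _ => first_succ z x A n hA), ← Finset.sum_div,
          Finset.sum_comm]
        refine le_trans ?_ (hs z hz hA)
        gcongr with d _
        exact ih _ (hP z hz hA d d.2)
  unfold hitProb
  exact Real.tsum_le_of_sum_range_le (fun n => stepProb_nonneg _ _) (fun M => key M z hz)

/-- The superharmonic function. -/
noncomputable def hfun (K : ℝ) (z : ℤ × ℤ) : ℝ :=
  1 / ((z.2 + K) * (z.2 + K + 1)) -
    3 * z.1 ^ 2 / ((z.2 + K - 1) * (z.2 + K) * (z.2 + K + 1) * (z.2 + K + 2))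

lemma poly_super (n t : ℝ) (ht : 2 < t) :
    2 * (1 / (t * (t+1))) + 1 / ((t+1) * (t+2)) + 1 / ((t-1)*t)
      - 3 * ((n+1)^2 + (n-1)^2) / ((t-1)*t*(t+1)*(t+2))
      - 3 * n^2 / (t*(t+1)*(t+2)*(t+3)) - 3 * n^2 / ((t-2)*(t-1)*t*(t+1))
    ≤ 4 * (1 / (t * (t+1)) - 3 * n^2 / ((t-1)*t*(t+1)*(t+2))) := by
  have h0 : 0 < t - 2 := by linarith
  have h1 : 0 < t - 1 := by linarith
  have h2 : 0 < t := by linarith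
  have h3 : 0 < t + 1 := by linarith
  have h4 : 0 < t + 2 := by linarith
  have h5 : 0 < t + 3 := by linarith
  have : 4 * (1 / (t * (t+1)) - 3 * n^2 / ((t-1)*t*(t+1)*(t+2))) -
     (2 * (1 / (t * (t+1))) + 1 / ((t+1) * (t+2)) + 1 / ((t-1)*t)
      - 3 * ((n+1)^2 + (n-1)^2) / ((t-1)*t*(t+1)*(t+2))
      - 3 * n^2 / (t*(t+1)*(t+2)*(t+3)) - 3 * n^2 / ((t-2)*(t-1)*t*(t+1)))
     = 60 * n^2 / ((t-2)*(t-1)*t*(t+1)*(t+2)*(t+3)) := by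
    field_simp
    ring
  have h6 : 0 ≤ 60 * n^2 / ((t-2)*(t-1)*t*(t+1)*(t+2)*(t+3)) := by positivity
  linarith

lemma sum_dirs (f : ℤ × ℤ → ℝ) :
    ∑ d : dirs, f d = f (1,0) + f (-1,0) + f (0,1) + f (0,-1) := by
  rw [Finset.sum_coe_sort dirs f]
  simp [dirs]
  ring

lemma hfun_super (K : ℝ) (z : ℤ × ℤ) (hz : 2 < z.2 + K) :
    (∑ d : dirs, hfun K (z + d)) / 4 ≤ hfun K z := by
  rw [sum_dirs (fun d => hfun K (z + d))]
  have := poly_super z.1 (z.2 + K) hz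
  simp only [hfun, Prod.fst_add, Prod.snd_add]
  push_cast
  rw [div_le_iff₀ (by norm_num)]
  refine le_of_eq_of_le ?_ (this.trans (le_of_eq (by ring)))
  generalize (z.1 : ℝ) = n
  have e1 : (z.2 : ℝ) + 1 + K = (z.2 + K) + 1 := by ring
  have e2 : (z.2 : ℝ) + -1 + K = (z.2 + K) - 1 := by ring
  rw [e1, e2, add_zero]
  generalize (z.2 : ℝ) + K = t
  have a1 : t + 1 + 1 = t + 2 := by ring
  have a2 : t + 1 + 2 = t + 3 := by ring
  have a3 : t + 1 - 1 = t := by ring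
  have a4 : t - 1 - 1 = t - 2 := by ring
  have a5 : t - 1 + 1 = t := by ring
  have a6 : t - 1 + 2 = t + 1 := by ring
  rw [a1, a2, a3, a4, a5, a6]
  ring

lemma hfun_le (K : ℝ) (z : ℤ × ℤ) (hz : 1 < z.2 + K) :
    hfun K z ≤ 1 / ((z.2 + K) * (z.2 + K + 1)) := by
  unfold hfun
  have h1 : 0 < (z.2 : ℝ) + K - 1 := by linarith
  have h2 : 0 < (z.2 : ℝ) + K := by linarith
  have : 0 ≤ 3 * (z.1 : ℝ) ^ 2 / ((z.2 + K - 1) * (z.2 + K) * (z.2 + K + 1) * (z.2 + K + 2)) := by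
    positivity
  linarith

lemma hfun_eq (K : ℝ) (z : ℤ × ℤ) (hz : 1 < z.2 + K) :
    hfun K z = ((z.2 + K - 1) * (z.2 + K + 2) - 3 * z.1 ^ 2) /
      ((z.2 + K - 1) * (z.2 + K) * (z.2 + K + 1) * (z.2 + K + 2)) := by
  unfold hfun
  have h1 : 0 < (z.2 : ℝ) + K - 1 := by linarith
  have h2 : 0 < (z.2 : ℝ) + K := by linarith
  field_simp

lemma hfun_pos (K : ℝ) (z : ℤ × ℤ) (hz : 1 < z.2 + K)
    (h : 2 * |(z.1 : ℝ)| ≤ z.2 + K - 1) : 0 < hfun K z := by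
  rw [hfun_eq K z hz]
  have h1 : 0 < (z.2 : ℝ) + K - 1 := by linarith
  have h2 : 0 < (z.2 : ℝ) + K := by linarith
  have h3 := abs_nonneg (z.1 : ℝ)
  have h4 := sq_abs (z.1 : ℝ)
  apply div_pos _ (by positivity)
  nlinarith

lemma two_mul_le_pow (n : ℕ) : (2 * n : ℤ) ≤ 2 ^ n := by
  induction n with
  | zero => norm_num
  | succ n ih =>
    have : (1 : ℤ) ≤ 2 ^ n := one_le_pow₀ (by norm_num)
    rcases n with _ | n
    · norm_num
    · push_cast at *
      rw [pow_succ]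
      linarith

lemma not_mem_B {z : ℤ × ℤ} (hz : 0 ≤ z.2) (h : z ∉ Bzero) :
    2 * |z.1| + 1 ≤ z.2 ∧ 2 ≤ z.2 := by
  have h1 : (2 : ℤ) ^ z.1.natAbs < z.2 := by
    by_contra hc
    exact h ⟨hz, not_lt.mp hc⟩
  have h2 := two_mul_le_pow z.1.natAbs
  have h3 : (1 : ℤ) ≤ 2 ^ z.1.natAbs := one_le_pow₀ (by norm_num)
  rw [Int.abs_eq_natAbs]
  constructor <;> linarith

lemma hit_bound (x : ℤ × ℤ) (hx : x ∈ Bzero) : ∃ C : ℝ, 0 ≤ C ∧ ∀ N : ℕ, ∀ z : ℤ × ℤ,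
    z.2 = N → z ∉ Bzero → hitProb z (Bzero ∪ lineH 0) x ≤ C / ((N + 1) * (N + 1)) := by
  set K : ℝ := 3 + 2 * |(x.1 : ℝ)| with hK
  have hK3 : 3 ≤ K := by have := abs_nonneg (x.1 : ℝ); linarith
  have hx2 : (0 : ℝ) ≤ x.2 := by exact_mod_cast hx.1
  have hxp : 0 < hfun K x := hfun_pos K x (by linarith) (by linarith)
  refine ⟨1 / hfun K x, by positivity, fun N z hzN hzB => ?_⟩
  have hz0 : 0 ≤ z.2 := by omega
  have hmain := hit_le_super (Bzero ∪ lineH 0) {z | 0 ≤ z.2 ∧ 2 * |z.1| ≤ z.2 + 1} x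
    (fun z => hfun K z / hfun K x) ?_ ?_ ?_ ?_ z ?_
  · refine hmain.trans ?_
    have hzr : (z.2 : ℝ) = N := by rw [hzN]; simp
    have hN : (0 : ℝ) ≤ N := Nat.cast_nonneg N
    have h1 := hfun_le K z (by rw [hzr]; linarith)
    rw [hzr] at h1
    have h2 : 1 / (((N : ℝ) + K) * (N + K + 1)) ≤ 1 / ((N + 1) * (N + 1)) := by
      gcongr <;> linarith
    calc hfun K z / hfun K x ≤ (1 / (((N : ℝ) + 1) * (N + 1))) / hfun K x := by
          gcongr; linarith
      _ = _ := by ring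
  · rintro w ⟨hw1, hw2⟩
    have a1 : (0 : ℝ) ≤ w.2 := by exact_mod_cast hw1
    have a2 : 2 * |(w.1 : ℝ)| ≤ w.2 + 1 := by exact_mod_cast hw2
    exact div_nonneg (hfun_pos K w (by linarith) (by linarith)).le hxp.le
  · exact (div_self hxp.ne').ge
  · rintro w ⟨hw1, hw2⟩ hwA d hd
    obtain ⟨b1, b2⟩ := not_mem_B hw1 (fun h => hwA (Or.inl h))
    simp only [dirs, Finset.mem_insert, Finset.mem_singleton] at hd
    simp only [Set.mem_setOf_eq, Prod.fst_add, Prod.snd_add]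
    rcases hd with rfl | rfl | rfl | rfl <;> dsimp only <;> grind
  · rintro w ⟨hw1, hw2⟩ hwA
    have a1 : (0 : ℝ) ≤ w.2 := by exact_mod_cast hw1
    have := hfun_super K w (by linarith)
    rw [← Finset.sum_div, div_right_comm]
    gcongr
  · have := not_mem_B hz0 hzB
    exact ⟨hz0, by linarith⟩

lemma hitProb_nonneg (z : ℤ × ℤ) (A : Set (ℤ × ℤ)) (x : ℤ × ℤ) : 0 ≤ hitProb z A x :=
  tsum_nonneg fun _ => stepProb_nonneg _ _

/-- **Counterexample 1.** Every point of `B⁰ = ∪_{n ∈ ℤ} {(n,k) : 0 ≤ k ≤ 2^{|n|}}` has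
zero stationary harmonic measure: `H_{B⁰}(x) = lim_{N→∞} H_{B⁰,N}(x) = 0` for all `x ∈ B⁰`. -/
theorem harm_Bzero_eq_zero (x : ℤ × ℤ) (hx : x ∈ Bzero) :
    Tendsto (fun N : ℕ => harm Bzero N x) atTop (nhds 0) := by
  obtain ⟨C, hC, hb⟩ := hit_bound x hx
  have hle : ∀ N : ℕ, harm Bzero N x ≤ 2 * C * (1 / ((N : ℝ) + 1)) := by
    intro N
    unfold harm
    refine Real.tsum_le_of_sum_le (fun z => hitProb_nonneg _ _ _) fun s => ?_
    have h1 : ∑ z ∈ s, hitProb (z : ℤ × ℤ) (Bzero ∪ lineH 0) x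
        ≤ s.card • (C / (((N : ℝ) + 1) * (N + 1))) :=
      Finset.sum_le_card_nsmul _ _ _ fun z _ => hb N z z.2.1 z.2.2
    have h2 : s.card ≤ 2 * N + 1 := by
      have : s.card ≤ (Finset.Icc (-N : ℤ) N).card := by
        refine Finset.card_le_card_of_injOn (fun z => z.1.1) ?_ ?_
        · intro z _
          have hz2 : z.1.2 = N := z.2.1
          have := not_mem_B (z := z.1) (by omega) z.2.2
          simp only [Finset.coe_Icc, Set.mem_Icc]
          grind
        · intro z _ w _ hzw
          have hz2 : z.1.2 = N := z.2.1
          have hw2 : w.1.2 = N := w.2.1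
          exact Subtype.ext (Prod.ext hzw (hz2.trans hw2.symm))
      rw [Int.card_Icc] at this
      omega
    refine h1.trans ?_
    rw [nsmul_eq_mul]
    have h3 : (s.card : ℝ) ≤ 2 * (N + 1) := by
      have : (s.card : ℝ) ≤ 2 * N + 1 := by exact_mod_cast h2
      linarith
    calc (s.card : ℝ) * (C / (((N : ℝ) + 1) * (N + 1)))
        ≤ (2 * (N + 1)) * (C / (((N : ℝ) + 1) * (N + 1))) := by gcongr
      _ = _ := by field_simp
  refine squeeze_zero (fun N => tsum_nonneg fun z => hitProb_nonneg _ _ _) hle ?_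
  simpa using (tendsto_one_div_add_atTop_nhds_zero_nat (𝕜 := ℝ)).const_mul (2 * C)

end SHM
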